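/- arXiv:2112.12007 — 2 statements merged into one kernel-verified Lean document; each statement's English description precedes it below -/
import Mathlib

section
/- Let τ > 0 be real and define u : ℝ → ℂ by u(r) := (i/(2τh)) ∫_ℝ e^{iτ|r−r'|/h} f(r') dr'. Then u is twice differentiable on ℝ and satisfies −h² u''(r) − τ² u(r) = f(r) for every r ∈ ℝ; moreover, for every r > b, u(r) = (i/(2τh)) e^{iτr/h} ∫_a^b e^{−iτr'/h} f(r') dr', and for every r < a, u(r) = (i/(2τh)) e^{−iτr/h} ∫_a^b e^{iτr'/h} f(r') dr'. -/
open MeasureTheory Filter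

/-!
Write `k = iτ/h` and `c = i/(2τh)`. Splitting the integral at `r' = r` gives, for every `r`,
`u r = c (e^{kr} ∫_a^r e^{-ks} f s ds + e^{-kr} ∫_r^b e^{ks} f s ds)` (`integral_kernel_split`);
since `f` vanishes on `(-∞, a]` and on `[b, ∞)`, this holds also for `r` outside `[a, b]`. By the
fundamental theorem of calculus the boundary terms cancel in the first derivative and add up to
`2 c k f` in the second, so `u'' = k² u + 2 c k f`, which is the equation because `k² = -τ²/h²` and
`2 c k = -1/h²`. For `r` outside `[a, b]` the sign of `r - r'` is constant on the support
of `f`, which yields the two representation formulas.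
-/

lemma integral_eq_interval_of_support {a b : ℝ} (hab : a ≤ b) {g : ℝ → ℂ}
    (hg : ∀ r : ℝ, r ∉ Set.Icc a b → g r = 0) : ∫ s, g s = ∫ s in a..b, g s := by
  rw [intervalIntegral.integral_of_le hab, ← integral_Icc_eq_integral_Ioc,
    setIntegral_eq_integral_of_forall_compl_eq_zero hg]

lemma vanish_left {a b : ℝ} {f : ℝ → ℂ} (hf : Continuous f)
    (hsupp : ∀ r : ℝ, r ∉ Set.Icc a b → f r = 0) {s : ℝ} (hs : s ≤ a) : f s = 0 := by
  have h1 : Set.EqOn f (fun _ => 0) (Set.Iio a) := fun x hx =>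
    hsupp x fun h => absurd h.1 (not_le.2 hx)
  have h2 := h1.closure hf continuous_const
  rw [closure_Iio] at h2
  exact h2 hs

lemma vanish_right {a b : ℝ} {f : ℝ → ℂ} (hf : Continuous f)
    (hsupp : ∀ r : ℝ, r ∉ Set.Icc a b → f r = 0) {s : ℝ} (hs : b ≤ s) : f s = 0 := by
  have h1 : Set.EqOn f (fun _ => 0) (Set.Ioi b) := fun x hx =>
    hsupp x fun h => absurd h.2 (not_le.2 hx)
  have h2 := h1.closure hf continuous_const
  rw [closure_Ioi] at h2
  exact h2 hs

/-- There is no restriction on `r`: for `r < a` or `r > b`, the extra piece of each interval lies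
where `f` vanishes. -/
lemma integral_kernel_split {a b : ℝ} (hab : a ≤ b) {f : ℝ → ℂ} (hf : Continuous f)
    (hsupp : ∀ r : ℝ, r ∉ Set.Icc a b → f r = 0) (k : ℂ) (r : ℝ) :
    ∫ s : ℝ, Complex.exp (k * ((|r - s| : ℝ) : ℂ)) * f s =
      Complex.exp (k * r) * (∫ s in a..r, Complex.exp (-(k * s)) * f s) +
      Complex.exp (-(k * r)) * (∫ s in r..b, Complex.exp (k * s) * f s) := by
  have hc : Continuous fun s : ℝ => Complex.exp (k * ((|r - s| : ℝ) : ℂ)) * f s := by fun_prop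
  rw [integral_eq_interval_of_support hab (fun s hs => by rw [hsupp s hs, mul_zero]),
    ← intervalIntegral.integral_add_adjacent_intervals
      (hc.intervalIntegrable a r) (hc.intervalIntegrable r b),
    ← intervalIntegral.integral_const_mul, ← intervalIntegral.integral_const_mul]
  congr 1
  · refine intervalIntegral.integral_congr fun s hs => ?_
    by_cases hsr : s ≤ r
    · rw [abs_of_nonneg (sub_nonneg.2 hsr), ← mul_assoc, ← Complex.exp_add]
      push_cast
      ring_nf
    · have : s ≤ a := by
        rcases Set.mem_uIcc.1 hs with h | h
        · exact absurd h.2 hsr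
        · exact h.2
      simp [vanish_left hf hsupp this]
  · refine intervalIntegral.integral_congr fun s hs => ?_
    by_cases hsr : r ≤ s
    · rw [abs_of_nonpos (sub_nonpos.2 hsr), ← mul_assoc, ← Complex.exp_add]
      push_cast
      ring_nf
    · have : b ≤ s := by
        rcases Set.mem_uIcc.1 hs with h | h
        · exact absurd h.1 hsr
        · exact h.1
      simp [vanish_right hf hsupp this]

/-- For real `τ > 0`, the function
`u(r) = (i/(2τh)) ∫ e^{iτ|r−r'|/h} f(r') dr'` is twice differentiable, solves
`−h²u'' − τ²u = f`, and satisfies the outgoing representation formulas for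
`r > b` and `r < a`. -/
theorem stmt_2 (h : ℝ) (hh : 0 < h) (a b : ℝ) (hab : a ≤ b)
    (f : ℝ → ℂ) (hf : Continuous f)
    (hsupp : ∀ r : ℝ, r ∉ Set.Icc a b → f r = 0)
    (τ : ℝ) (hτ : 0 < τ)
    (u : ℝ → ℂ)
    (hu : ∀ r : ℝ, u r = (Complex.I / (2 * (τ : ℂ) * (h : ℂ))) *
        ∫ r' : ℝ, Complex.exp (Complex.I * (τ : ℂ) * ((|r - r'| : ℝ) : ℂ) / (h : ℂ)) * f r') :
    (∀ r : ℝ, DifferentiableAt ℝ u r ∧ DifferentiableAt ℝ (deriv u) r) ∧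
    (∀ r : ℝ, -(h : ℂ) ^ 2 * deriv (deriv u) r - (τ : ℂ) ^ 2 * u r = f r) ∧
    (∀ r : ℝ, b < r →
      u r = (Complex.I / (2 * (τ : ℂ) * (h : ℂ))) *
          Complex.exp (Complex.I * (τ : ℂ) * (r : ℂ) / (h : ℂ)) *
        ∫ r' in a..b, Complex.exp (-(Complex.I * (τ : ℂ) * (r' : ℂ)) / (h : ℂ)) * f r') ∧
    (∀ r : ℝ, r < a →
      u r = (Complex.I / (2 * (τ : ℂ) * (h : ℂ))) *
          Complex.exp (-(Complex.I * (τ : ℂ) * (r : ℂ)) / (h : ℂ)) *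
        ∫ r' in a..b, Complex.exp (Complex.I * (τ : ℂ) * (r' : ℂ) / (h : ℂ)) * f r') := by
  have hh' : (h : ℂ) ≠ 0 := by exact_mod_cast hh.ne'
  have hτ' : (τ : ℂ) ≠ 0 := by exact_mod_cast hτ.ne'
  obtain ⟨k, hk⟩ : ∃ k : ℂ, k = Complex.I * τ / h := ⟨_, rfl⟩
  obtain ⟨c, hc⟩ : ∃ c : ℂ, c = Complex.I / (2 * (τ : ℂ) * (h : ℂ)) := ⟨_, rfl⟩
  have e1 : ∀ x : ℂ, Complex.I * (τ : ℂ) * x / (h : ℂ) = k * x := fun x => by rw [hk]; ring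
  have e2 : ∀ x : ℂ, -(Complex.I * (τ : ℂ) * x) / (h : ℂ) = -(k * x) := fun x => by
    rw [hk]; ring
  simp only [e1, e2, ← hc] at hu ⊢
  have hE : ∀ r : ℝ, HasDerivAt (fun r : ℝ => Complex.exp (k * r))
      (Complex.exp (k * r) * k) r := fun r => by
    have := ((Complex.ofRealCLM.hasDerivAt (x := r)).const_mul k).cexp
    simpa using this
  have hE' : ∀ r : ℝ, HasDerivAt (fun r : ℝ => Complex.exp (-(k * r)))
      (Complex.exp (-(k * r)) * -k) r := fun r => by
    have := ((Complex.ofRealCLM.hasDerivAt (x := r)).const_mul k).neg.cexp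
    simpa using this
  have hP : ∀ r : ℝ, HasDerivAt (fun r : ℝ => ∫ s in a..r, Complex.exp (-(k * s)) * f s)
      (Complex.exp (-(k * r)) * f r) r := fun r =>
    ((show Continuous fun s : ℝ => Complex.exp (-(k * s)) * f s by
      fun_prop).integral_hasStrictDerivAt a r).hasDerivAt
  have hQ : ∀ r : ℝ, HasDerivAt (fun r : ℝ => ∫ s in r..b, Complex.exp (k * s) * f s)
      (-(Complex.exp (k * r) * f r)) r := fun r => by
    have hcont : Continuous fun s : ℝ => Complex.exp (k * s) * f s := by fun_prop
    exact intervalIntegral.integral_hasDerivAt_left (hcont.intervalIntegrable r b)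
      hcont.aestronglyMeasurable.stronglyMeasurableAtFilter hcont.continuousAt
  have hEE : ∀ r : ℝ, Complex.exp (k * r) * Complex.exp (-(k * r)) = 1 := fun r => by
    rw [← Complex.exp_add, add_neg_cancel, Complex.exp_zero]
  have hu' : u = fun r : ℝ => c *
      (Complex.exp (k * r) * (∫ s in a..r, Complex.exp (-(k * s)) * f s) +
      Complex.exp (-(k * r)) * (∫ s in r..b, Complex.exp (k * s) * f s)) := by
    funext r
    rw [hu, integral_kernel_split hab hf hsupp]
  have hd1 : ∀ r : ℝ, HasDerivAt u (c * k *
      (Complex.exp (k * r) * (∫ s in a..r, Complex.exp (-(k * s)) * f s) -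
      Complex.exp (-(k * r)) * (∫ s in r..b, Complex.exp (k * s) * f s))) r := fun r => by
    rw [hu']
    refine ((((hE r).mul (hP r)).add ((hE' r).mul (hQ r))).const_mul c).congr_deriv ?_
    ring
  have hdu : deriv u = fun r : ℝ => c * k *
      (Complex.exp (k * r) * (∫ s in a..r, Complex.exp (-(k * s)) * f s) -
      Complex.exp (-(k * r)) * (∫ s in r..b, Complex.exp (k * s) * f s)) :=
    funext fun r => (hd1 r).deriv
  have hd2 : ∀ r : ℝ, HasDerivAt (deriv u) (k ^ 2 * u r + 2 * c * k * f r) r := fun r => by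
    rw [hdu, hu']
    refine ((((hE r).mul (hP r)).sub ((hE' r).mul (hQ r))).const_mul (c * k)).congr_deriv ?_
    linear_combination (2 * c * k * f r) * hEE r
  refine ⟨fun r => ⟨(hd1 r).differentiableAt, (hd2 r).differentiableAt⟩, fun r => ?_,
    fun r hr => ?_, fun r hr => ?_⟩
  · have hk2 : (h : ℂ) ^ 2 * k ^ 2 = -(τ : ℂ) ^ 2 := by
      rw [hk]; field_simp; rw [Complex.I_sq]
    have hck : (h : ℂ) ^ 2 * (2 * c * k) = -1 := by
      rw [hk, hc]; field_simp; rw [Complex.I_sq]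
    rw [(hd2 r).deriv]
    linear_combination (-u r) * hk2 - f r * hck
  · rw [hu, integral_eq_interval_of_support hab (fun s hs => by rw [hsupp s hs, mul_zero]),
      mul_assoc, ← intervalIntegral.integral_const_mul (Complex.exp _)]
    congr 1
    refine intervalIntegral.integral_congr fun s hs => ?_
    rw [Set.uIcc_of_le hab] at hs
    rw [abs_of_nonneg (by linarith [hs.2]), ← mul_assoc, ← Complex.exp_add]
    push_cast
    ring_nf
  · rw [hu, integral_eq_interval_of_support hab (fun s hs => by rw [hsupp s hs, mul_zero]),
      mul_assoc, ← intervalIntegral.integral_const_mul (Complex.exp _)]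
    congr 1
    refine intervalIntegral.integral_congr fun s hs => ?_
    rw [Set.uIcc_of_le hab] at hs
    rw [abs_of_nonpos (by linarith [hs.1]), ← mul_assoc, ← Complex.exp_add]
    push_cast
    ring_nf
end

section
/- Let ε ∈ (0,1), α > 0, and τ ∈ [0, 1−ε]. Let φ : ℝ → ℝ be continuously differentiable with 0 < φ(s) ≤ 1 and s·φ'(s) ≥ 0 for all s ∈ ℝ. Let w₁ : ℝ → ℝ be the odd function with w₁(s) = 1 − (1+s)^{−α} for s ≥ 0, so that w₁ is differentiable on ℝ with w₁'(s) = α (1+|s|)^{−(1+α)}. Set β := 2/ε and w := w₁ · φ^β. Then w and wφ are differentiable and for every s ∈ ℝ, w'(s) − τ (wφ)'(s) ≥ ε · φ(s)^β · α (1+|s|)^{−(1+α)}. -/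
/-!
Write `β = 2/ε`. By the product rule,
`w' - τ (wφ)' = (1 - τφ) w₁' φ^β + w₁ φ' φ^(β-1) ((1 - τφ) β - τφ)`.
Since `τ ≤ 1 - ε` and `φ ≤ 1`, we have `1 - τφ ≥ ε`, so the first term dominates the claimed lower
bound. The second term is nonnegative: `(1 - τφ) β ≥ 2 ≥ τφ` by the choice of `β`, while `w₁` and
`φ'` both have the sign of `s`.
-/

open MeasureTheory Filter

/-- with `β = 2/ε` and `w = w₁ φ^β`, one has the pointwise lower
bound `w' − τ(wφ)' ≥ ε φ^β α (1+|s|)^{−(1+α)}`. -/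
theorem stmt_8 (ε α τ : ℝ) (hε : ε ∈ Set.Ioo (0 : ℝ) 1) (hα : 0 < α)
    (hτ : τ ∈ Set.Icc (0 : ℝ) (1 - ε))
    (φ : ℝ → ℝ) (hφ : ContDiff ℝ 1 φ)
    (hφpos : ∀ s : ℝ, 0 < φ s) (hφle : ∀ s : ℝ, φ s ≤ 1)
    (hφmono : ∀ s : ℝ, 0 ≤ s * deriv φ s)
    (w₁ : ℝ → ℝ) (hodd : ∀ s : ℝ, w₁ (-s) = -w₁ s)
    (hw₁ : ∀ s : ℝ, 0 ≤ s → w₁ s = 1 - (1 + s) ^ (-α))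
    (hw₁diff : Differentiable ℝ w₁)
    (hw₁' : ∀ s : ℝ, deriv w₁ s = α * (1 + |s|) ^ (-(1 + α))) :
    Differentiable ℝ (fun s => w₁ s * φ s ^ (2 / ε)) ∧
    Differentiable ℝ (fun s => w₁ s * φ s ^ (2 / ε) * φ s) ∧
    ∀ s : ℝ, ε * φ s ^ (2 / ε) * (α * (1 + |s|) ^ (-(1 + α))) ≤
      deriv (fun s => w₁ s * φ s ^ (2 / ε)) s
        - τ * deriv (fun s => w₁ s * φ s ^ (2 / ε) * φ s) s := by
  obtain ⟨hε0, hε1⟩ := hε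
  obtain ⟨hτ0, hτ1⟩ := hτ
  have hφd : Differentiable ℝ φ := hφ.differentiable (by norm_num)
  have hP : ∀ s, HasDerivAt (fun s => φ s ^ (2 / ε))
      (deriv φ s * (2 / ε) * φ s ^ (2 / ε - 1)) s := fun s =>
    (hφd s).hasDerivAt.rpow_const (Or.inl (hφpos s).ne')
  have hw : ∀ s, HasDerivAt (fun s => w₁ s * φ s ^ (2 / ε))
      (deriv w₁ s * φ s ^ (2 / ε) + w₁ s * (deriv φ s * (2 / ε) * φ s ^ (2 / ε - 1))) s :=
    fun s => (hw₁diff s).hasDerivAt.mul (hP s)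
  have hwφ : ∀ s, HasDerivAt (fun s => w₁ s * φ s ^ (2 / ε) * φ s)
      ((deriv w₁ s * φ s ^ (2 / ε) + w₁ s * (deriv φ s * (2 / ε) * φ s ^ (2 / ε - 1))) * φ s
        + w₁ s * φ s ^ (2 / ε) * deriv φ s) s :=
    fun s => (hw s).mul (hφd s).hasDerivAt
  refine ⟨fun s => (hw s).differentiableAt, fun s => (hwφ s).differentiableAt, fun s => ?_⟩
  rw [(hw s).deriv, (hwφ s).deriv, hw₁' s]
  have hw₁nonneg : ∀ t : ℝ, 0 ≤ t → 0 ≤ w₁ t := fun t ht => by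
    rw [hw₁ t ht]
    linarith [Real.rpow_le_one_of_one_le_of_nonpos (x := 1 + t) (z := -α)
      (by linarith) (by linarith)]
  have hsign : 0 ≤ w₁ s * deriv φ s := by
    rcases lt_trichotomy s 0 with hs | hs | hs
    · have h1 : w₁ s ≤ 0 := by
        have := hw₁nonneg (-s) (by linarith)
        rw [hodd] at this
        linarith
      have h2 : deriv φ s ≤ 0 := by
        by_contra! h
        linarith [hφmono s, mul_neg_of_neg_of_pos hs h]
      exact mul_nonneg_of_nonpos_of_nonpos h1 h2
    · have h0 : w₁ s = 0 := by
        rw [hs, hw₁ 0 le_rfl]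
        simp
      simp [h0]
    · exact mul_nonneg (hw₁nonneg s hs.le) (nonneg_of_mul_nonneg_right (hφmono s) hs)
  have hQ : φ s ^ (2 / ε) = φ s ^ (2 / ε - 1) * φ s := by
    rw [← Real.rpow_add_one (hφpos s).ne', sub_add_cancel]
  have hQ0 : 0 < φ s ^ (2 / ε - 1) := Real.rpow_pos_of_pos (hφpos s) _
  have hD : 0 ≤ α * (1 + |s|) ^ (-(1 + α)) := by positivity
  have hτφ : τ * φ s ≤ τ := mul_le_of_le_one_right hτ0 (hφle s)
  have hβ : ε * (2 / ε) = 2 := by field_simp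
  have hβ0 : 0 < 2 / ε := by positivity
  have hfactor : 0 ≤ (1 - τ * φ s) * (2 / ε) - τ * φ s := by
    have : ε * (2 / ε) ≤ (1 - τ * φ s) * (2 / ε) :=
      mul_le_mul_of_nonneg_right (by linarith) hβ0.le
    linarith
  rw [hQ]
  generalize α * (1 + |s|) ^ (-(1 + α)) = D at *
  generalize φ s ^ (2 / ε - 1) = Q at *
  have hmain : 0 ≤ (1 - τ * φ s - ε) * (D * (Q * φ s)) :=
    mul_nonneg (by linarith) (mul_nonneg hD (mul_pos hQ0 (hφpos s)).le)
  have hrest := mul_nonneg (mul_nonneg hsign hQ0.le) hfactor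
  linear_combination hmain + hrest
end
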